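/- arXiv:2405.19015 — 2 statements merged into one kernel-verified Lean document; each statement's English description precedes it below -/
import Mathlib

section
/- Let H be a real Hilbert space and X ⊆ H a nonempty closed convex set, and let P_X denote the metric projection onto X (the unique nearest-point map). Let f, g : H → ℝ be convex and differentiable, let β ≥ 0, η > 0, γ > 0, and define the regularized Lagrangian L(x, q) = f(x) + q·g(x) − (β/2)·q². Let x̄ ∈ X and q̄ ≥ 0, and set x⁺ = P_X(x̄ − η·(∇f(x̄) + q̄·∇g(x̄))) and q⁺ = max{0, q̄ + γ·(g(x̄) − β·q̄)}. Then for every u ∈ X and every q ≥ 0: L(x̄, q) − L(u, q̄) ≤ (1/(2η))·(‖u − x̄‖² − ‖u − x⁺‖²) + (1/(2γ))·((q − q̄)² − (q − q⁺)²) + (η/2)·‖∇f(x̄) + q̄·∇g(x̄)‖² + (γ/2)·(g(x̄) − β·q̄)². -/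
/-!
A subgradient of the convex function `L(·, q̄)` at `x̄` bounds `L(x̄, q̄) - L(u, q̄)` by an inner
product, and so does a supergradient of the concave function `L(x̄, ·)` at `q̄` for
`L(x̄, q) - L(x̄, q̄)`; the sum of the two gaps is the gap to be bounded. Expanding
`‖u - (x̄ - η v)‖²` turns each inner product into a difference of squared distances plus
`(η / 2) ‖v‖²`, and projecting `x̄ - η v` onto a convex set only brings it closer to the
points `u` of that set. The primal and the dual step are thus two instances of one inequality.
-/

open Set
open scoped RealInnerProductSpace

section Subgradient

variable {E : Type*} [NormedAddCommGroup E] [InnerProductSpace ℝ E]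

/-- `v` is a subgradient of `f` at `x` relative to `s`: the affine function with value `f x` at `x`
and slope `v` minorizes `f` on `s`. The point `x` itself need not belong to `s`. -/
def IsSubgradientOn (f : E → ℝ) (s : Set E) (v x : E) : Prop :=
  ∀ y ∈ s, f x + ⟪v, y - x⟫ ≤ f y

lemma add_apply_sub_le_of_hasFDerivWithinAt {V : Type*} [NormedAddCommGroup V] [NormedSpace ℝ V]
    {s : Set V} {f : V → ℝ} {φ : V →L[ℝ] ℝ} {x y : V} (hf : ConvexOn ℝ s f)
    (hφ : HasFDerivWithinAt f φ s x) (hx : x ∈ s) (hy : y ∈ s) :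
    f x + φ (y - x) ≤ f y := by
  let ℓ : ℝ →ᵃ[ℝ] V := AffineMap.lineMap x y
  have hconv : ConvexOn ℝ (ℓ ⁻¹' s) (f ∘ ℓ) := hf.comp_affineMap ℓ
  have hderiv : HasDerivWithinAt (f ∘ ℓ) (φ (y - x)) (ℓ ⁻¹' s) 0 :=
    hφ.comp_hasDerivWithinAt_of_eq 0 AffineMap.hasDerivWithinAt_lineMap (mapsTo_preimage ℓ s)
      (AffineMap.lineMap_apply_zero x y).symm
  have hslope : φ (y - x) ≤ slope (f ∘ ℓ) 0 1 :=
    hconv.le_slope_of_hasDerivWithinAt (by simpa [ℓ] using hx) (by simpa [ℓ] using hy)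
      one_pos hderiv
  have hsecant : slope (f ∘ ℓ) 0 1 = f y - f x := by simp [ℓ, slope_def_field]
  linarith

lemma isSubgradientOn_of_hasGradientWithinAt [CompleteSpace E] {s : Set E} {f : E → ℝ} {v x : E}
    (hf : ConvexOn ℝ s f) (hv : HasGradientWithinAt f v s x) (hx : x ∈ s) :
    IsSubgradientOn f s v x :=
  fun _ hy ↦ add_apply_sub_le_of_hasFDerivWithinAt hf hv.hasFDerivWithinAt hx hy

end Subgradient

section NearestPoint

/-- `p` is a point of `s` at minimal distance from `y`. In an inner product space and for convex `s`
there is at most one such point, the metric projection of `y` onto `s`; as a relation, this does not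
presuppose that a nearest point exists. -/
def IsNearestPoint {E : Type*} [NormedAddCommGroup E] (s : Set E) (y p : E) : Prop :=
  p ∈ s ∧ ∀ z ∈ s, ‖y - p‖ ≤ ‖y - z‖

lemma isNearestPoint_Ici_max (a t : ℝ) : IsNearestPoint (Ici a) t (max a t) := by
  refine ⟨le_max_left a t, fun z (hz : a ≤ z) ↦ ?_⟩
  rcases le_total a t with hat | hta
  · simp [max_eq_right hat]
  · rw [max_eq_left hta, norm_sub_rev t a, norm_sub_rev t z,
      Real.norm_of_nonneg (sub_nonneg.2 hta), Real.norm_of_nonneg (sub_nonneg.2 (hta.trans hz))]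
    exact sub_le_sub_right hz t

variable {E : Type*} [NormedAddCommGroup E] [InnerProductSpace ℝ E]
  {s : Set E} {f : E → ℝ} {x y u v p : E} {η : ℝ}

namespace IsNearestPoint

lemma inner_sub_sub_nonpos (hp : IsNearestPoint s y p) (hs : Convex ℝ s) (hu : u ∈ s) :
    ⟪y - p, u - p⟫ ≤ 0 := by
  have : Nonempty s := ⟨⟨p, hp.1⟩⟩
  have hbdd : BddBelow (range fun z : s ↦ ‖y - z‖) :=
    ⟨0, forall_mem_range.2 fun _ ↦ norm_nonneg _⟩
  have hinf : ‖y - p‖ = ⨅ z : s, ‖y - z‖ :=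
    le_antisymm (le_ciInf fun z ↦ hp.2 z z.2) (ciInf_le hbdd ⟨p, hp.1⟩)
  exact (norm_eq_iInf_iff_real_inner_le_zero hs hp.1).1 hinf u hu

lemma norm_sub_sq_le (hp : IsNearestPoint s y p) (hs : Convex ℝ s) (hu : u ∈ s) :
    ‖u - p‖ ^ 2 ≤ ‖u - y‖ ^ 2 := by
  have hexpand : ‖u - y‖ ^ 2 = ‖u - p‖ ^ 2 - 2 * ⟪y - p, u - p⟫ + ‖y - p‖ ^ 2 := by
    rw [← sub_sub_sub_cancel_right u y p, norm_sub_sq_real, real_inner_comm]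
  linarith [hp.inner_sub_sub_nonpos hs hu, sq_nonneg ‖y - p‖]

lemma inner_sub_le (hp : IsNearestPoint s (x - η • v) p) (hs : Convex ℝ s) (hη : 0 < η)
    (hu : u ∈ s) :
    ⟪v, x - u⟫ ≤ 1 / (2 * η) * (‖u - x‖ ^ 2 - ‖u - p‖ ^ 2) + η / 2 * ‖v‖ ^ 2 := by
  have hexpand : ‖u - (x - η • v)‖ ^ 2
      = ‖u - x‖ ^ 2 - 2 * η * ⟪v, x - u⟫ + η ^ 2 * ‖v‖ ^ 2 := by
    rw [← sub_add, norm_add_sq_real, real_inner_smul_right, norm_smul, mul_pow, Real.norm_eq_abs,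
      sq_abs, real_inner_comm, ← neg_sub x u, inner_neg_right]
    ring
  have hscaled : 2 * η * ⟪v, x - u⟫ ≤ ‖u - x‖ ^ 2 - ‖u - p‖ ^ 2 + η ^ 2 * ‖v‖ ^ 2 := by
    linarith [hp.norm_sub_sq_le hs hu]
  calc ⟪v, x - u⟫ = 2 * η * ⟪v, x - u⟫ / (2 * η) := by field_simp
    _ ≤ (‖u - x‖ ^ 2 - ‖u - p‖ ^ 2 + η ^ 2 * ‖v‖ ^ 2) / (2 * η) := by gcongr
    _ = 1 / (2 * η) * (‖u - x‖ ^ 2 - ‖u - p‖ ^ 2) + η / 2 * ‖v‖ ^ 2 := by field_simp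

end IsNearestPoint

lemma IsSubgradientOn.sub_le_of_isNearestPoint (hv : IsSubgradientOn f s v x)
    (hp : IsNearestPoint s (x - η • v) p) (hs : Convex ℝ s) (hη : 0 < η) (hu : u ∈ s) :
    f x - f u ≤ 1 / (2 * η) * (‖u - x‖ ^ 2 - ‖u - p‖ ^ 2) + η / 2 * ‖v‖ ^ 2 := by
  have hinner : ⟪v, x - u⟫ = -⟪v, u - x⟫ := by rw [← inner_neg_right, neg_sub]
  linarith [hv u hu, hp.inner_sub_le hs hη hu]

end NearestPoint

lemma saddle_gap_le_of_isNearestPoint {E F : Type*}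
    [NormedAddCommGroup E] [InnerProductSpace ℝ E] [NormedAddCommGroup F] [InnerProductSpace ℝ F]
    {Φ : E → F → ℝ} {s : Set E} {t : Set F} {x x' u v : E} {y y' z w : F} {η γ : ℝ}
    (hs : Convex ℝ s) (ht : Convex ℝ t) (hη : 0 < η) (hγ : 0 < γ)
    (hv : IsSubgradientOn (fun a ↦ Φ a y) s v x) (hw : IsSubgradientOn (fun b ↦ -Φ x b) t (-w) y)
    (hx' : IsNearestPoint s (x - η • v) x') (hy' : IsNearestPoint t (y + γ • w) y')
    (hu : u ∈ s) (hz : z ∈ t) :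
    Φ x z - Φ u y ≤
      1 / (2 * η) * (‖u - x‖ ^ 2 - ‖u - x'‖ ^ 2) + 1 / (2 * γ) * (‖z - y‖ ^ 2 - ‖z - y'‖ ^ 2) +
        η / 2 * ‖v‖ ^ 2 + γ / 2 * ‖w‖ ^ 2 := by
  have hdescent := hv.sub_le_of_isNearestPoint hx' hs hη hu
  have hascent := hw.sub_le_of_isNearestPoint (by simpa using hy') ht hγ hz
  rw [norm_neg] at hascent
  linarith

section RegularizedLagrangian

variable {E : Type*}

/-- The Lagrangian of minimizing `f` subject to `g ≤ 0`, with multiplier `q`, made `β`-strongly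
concave in `q` by a quadratic penalty on the multiplier. -/
noncomputable def regularizedLagrangian (f g : E → ℝ) (β : ℝ) (x : E) (q : ℝ) : ℝ :=
  f x + q * g x - β / 2 * q ^ 2

lemma isSubgradientOn_regularizedLagrangian [NormedAddCommGroup E] [InnerProductSpace ℝ E]
    {f g : E → ℝ} {s : Set E} {x a b : E} {q : ℝ} (β : ℝ) (ha : IsSubgradientOn f s a x)
    (hb : IsSubgradientOn g s b x) (hq : 0 ≤ q) :
    IsSubgradientOn (fun x ↦ regularizedLagrangian f g β x q) s (a + q • b) x := by
  intro y hy
  have hqb : q * (g x + ⟪b, y - x⟫) ≤ q * g y := mul_le_mul_of_nonneg_left (hb y hy) hq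
  simp only [regularizedLagrangian, inner_add_left, real_inner_smul_left]
  linarith [ha y hy]

lemma isSubgradientOn_neg_regularizedLagrangian (f g : E → ℝ) {β : ℝ} (hβ : 0 ≤ β) (x : E)
    (t : Set ℝ) (q : ℝ) :
    IsSubgradientOn (fun q ↦ -regularizedLagrangian f g β x q) t (-(g x - β * q)) q := by
  intro r _
  have hcurv : 0 ≤ β / 2 * (r - q) ^ 2 := by positivity
  simp only [regularizedLagrangian, Real.inner_apply]
  linarith

end RegularizedLagrangian

theorem primal_dual_step_general {H : Type*} [NormedAddCommGroup H] [InnerProductSpace ℝ H]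
    {X : Set H} {Q : Set ℝ} (hX : Convex ℝ X) (hQ : Convex ℝ Q) {f g : H → ℝ} {β η γ : ℝ}
    (hβ : 0 ≤ β) (hη : 0 < η) (hγ : 0 < γ) {xbar xplus a b : H} {qbar qplus : ℝ}
    (ha : IsSubgradientOn f X a xbar) (hb : IsSubgradientOn g X b xbar) (hqbar : 0 ≤ qbar)
    (hxplus : IsNearestPoint X (xbar - η • (a + qbar • b)) xplus)
    (hqplus : IsNearestPoint Q (qbar + γ * (g xbar - β * qbar)) qplus)
    {u : H} (hu : u ∈ X) {q : ℝ} (hq : q ∈ Q) :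
    regularizedLagrangian f g β xbar q - regularizedLagrangian f g β u qbar ≤
      (1 / (2 * η)) * (‖u - xbar‖ ^ 2 - ‖u - xplus‖ ^ 2) +
      (1 / (2 * γ)) * ((q - qbar) ^ 2 - (q - qplus) ^ 2) +
      (η / 2) * ‖a + qbar • b‖ ^ 2 +
      (γ / 2) * (g xbar - β * qbar) ^ 2 := by
  have hprimal := isSubgradientOn_regularizedLagrangian β ha hb hqbar
  have hdual := isSubgradientOn_neg_regularizedLagrangian f g hβ xbar Q qbar
  simpa only [Real.norm_eq_abs, sq_abs] using
    saddle_gap_le_of_isNearestPoint hX hQ hη hγ hprimal hdual hxplus hqplus hu hq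

/-- One primal–dual step of projected gradient descent–ascent on the regularized
Lagrangian `L(x,q) = f(x) + q·g(x) − (β/2)q²`: for every `u ∈ X` and `q ≥ 0`,
`L(x̄, q) − L(u, q̄)` is bounded by the stated telescoping and step-size terms. -/
theorem primal_dual_step {H : Type*} [NormedAddCommGroup H] [InnerProductSpace ℝ H]
    [CompleteSpace H]
    (X : Set H) (hXne : X.Nonempty) (hXcl : IsClosed X) (hXcv : Convex ℝ X)
    (P : H → H)
    (hP : ∀ y : H, P y ∈ X ∧ ∀ z ∈ X, ‖y - P y‖ ≤ ‖y - z‖)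
    (f g : H → ℝ) (f' g' : H → H)
    (hf : ConvexOn ℝ Set.univ f) (hg : ConvexOn ℝ Set.univ g)
    (hf' : ∀ x : H, HasGradientAt f (f' x) x)
    (hg' : ∀ x : H, HasGradientAt g (g' x) x)
    (β η γ : ℝ) (hβ : 0 ≤ β) (hη : 0 < η) (hγ : 0 < γ)
    (L : H → ℝ → ℝ) (hL : ∀ x p, L x p = f x + p * g x - β / 2 * p ^ 2)
    (xbar : H) (hxbar : xbar ∈ X) (qbar : ℝ) (hqbar : 0 ≤ qbar)
    (xplus : H) (hxplus : xplus = P (xbar - η • (f' xbar + qbar • g' xbar)))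
    (qplus : ℝ) (hqplus : qplus = max 0 (qbar + γ * (g xbar - β * qbar))) :
    ∀ u ∈ X, ∀ q : ℝ, 0 ≤ q →
      L xbar q - L u qbar ≤
        (1 / (2 * η)) * (‖u - xbar‖ ^ 2 - ‖u - xplus‖ ^ 2) +
        (1 / (2 * γ)) * ((q - qbar) ^ 2 - (q - qplus) ^ 2) +
        (η / 2) * ‖f' xbar + qbar • g' xbar‖ ^ 2 +
        (γ / 2) * (g xbar - β * qbar) ^ 2 := by
  obtain rfl : L = regularizedLagrangian f g β := funext₂ hL
  subst hxplus hqplus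
  have hsub {h : H → ℝ} {v : H} (hh : ConvexOn ℝ univ h) (hv : HasGradientAt h v xbar) :
      IsSubgradientOn h X v xbar :=
    isSubgradientOn_of_hasGradientWithinAt (hh.subset (subset_univ X) hXcv)
      hv.hasFDerivAt.hasFDerivWithinAt hxbar
  exact fun u hu q hq ↦ primal_dual_step_general hXcv (convex_Ici 0) hβ hη hγ (hsub hf (hf' xbar))
    (hsub hg (hg' xbar)) hqbar (hP _) (isNearestPoint_Ici_max 0 _) hu hq
end

section
/- Let N ≥ 1 be an integer, δ > 0, and let f : ℝ^N → ℝ be continuous. Define the ball-smoothed function f̂(x) as the average of f over the closed ball of radius δ centered at x, i.e., f̂(x) = (1/λ(B(x,δ)))·∫_{B(x,δ)} f(y) dλ(y) where λ is Lebesgue measure. Then f̂ is differentiable and for every x ∈ ℝ^N its gradient equals ∇f̂(x) = (N/δ)·∫_{S^{N−1}} f(x + δu)·u dσ(u), where σ is the uniform probability measure on the unit sphere S^{N−1} ⊆ ℝ^N. -/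
/-!
For `‖h‖ ≤ δ` the ball of radius `δ` about `h` is star-shaped around the origin, and the ray in the
unit direction `u` leaves it at the distance
`exitDist δ h u = ⟪h, u⟫ + √(δ² - ‖h‖² + ⟪h, u⟫²) = δ + ⟪h, u⟫ + o(h)`.
In polar coordinates the integral over the moving ball is therefore a sphere integral of radial
integrals in which only the upper limit `exitDist δ h u` depends on `h`. Differentiating under the
sphere integral leaves the boundary values `δ ^ (n - 1) f (x + δ u) ⟪u, ·⟫`.

Any rotation-invariant probability measure on the sphere is the normalized surface measure: when
`σ` and `ν` are rotation invariant and carried by the unit sphere, `∫ charFun ν (‖ξ‖ x) dσ(x)`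
equals `charFun ν ξ` up to the mass of `σ`, and by Fubini it is symmetric in `σ` and `ν`.
-/

open MeasureTheory Metric Set Module
open scoped Pointwise RealInnerProductSpace

section PolarCoordinates

variable {F : Type*} [NormedAddCommGroup F] [NormedSpace ℝ F]

theorem integral_volumeIoiPow (n : ℕ) (k : ℝ → F) :
    ∫ r, k r ∂(Measure.volumeIoiPow n) = ∫ r in Ioi 0, r ^ n • k r := by
  calc ∫ r, k r ∂(Measure.volumeIoiPow n)
      = ∫ r : Ioi (0 : ℝ), (r : ℝ) ^ n • k r ∂(Measure.comap Subtype.val volume) := by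
        rw [Measure.volumeIoiPow, integral_withDensity_eq_integral_toReal_smul (by fun_prop)
          (.of_forall fun _ ↦ ENNReal.ofReal_lt_top)]
        exact integral_congr_ae (.of_forall fun r ↦ by
          simp only [ENNReal.toReal_ofReal (pow_nonneg r.2.le n)])
    _ = ∫ r in Ioi 0, r ^ n • k r :=
        integral_subtype_comap measurableSet_Ioi fun r : ℝ ↦ r ^ n • k r

variable {E : Type*} [NormedAddCommGroup E] [NormedSpace ℝ E] [FiniteDimensional ℝ E]
  [Nontrivial E] [MeasurableSpace E] [BorelSpace E]

theorem integral_eq_integral_toSphere (μ : Measure E) [μ.IsAddHaarMeasure] {g : E → F}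
    (hg : Integrable g μ) :
    ∫ x, g x ∂μ = ∫ u, (∫ r in Ioi (0 : ℝ), r ^ (finrank ℝ E - 1) • g (r • u)) ∂μ.toSphere := by
  have hpolar := μ.measurePreserving_homeomorphUnitSphereProd
  have hemb := (homeomorphUnitSphereProd E).measurableEmbedding
  set G : sphere (0 : E) 1 × Ioi (0 : ℝ) → F := fun p ↦ g ((p.2 : ℝ) • p.1)
  have hG : G ∘ homeomorphUnitSphereProd E = g ∘ Subtype.val := by
    funext x
    exact congrArg (g ∘ Subtype.val) ((homeomorphUnitSphereProd E).symm_apply_apply x)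
  have hint : Integrable G (μ.toSphere.prod (.volumeIoiPow (finrank ℝ E - 1))) := by
    rw [← hpolar.integrable_comp_emb hemb, hG, ← integrableOn_iff_comap_subtypeVal
      (measurableSet_singleton _).compl]
    exact hg.integrableOn
  calc ∫ x, g x ∂μ
      = ∫ x : ({0}ᶜ : Set E), G (homeomorphUnitSphereProd E x) ∂μ.comap (↑) := by
        have hcomap := integral_subtype_comap (μ := μ) (measurableSet_singleton (0 : E)).compl g
        rw [restrict_compl_singleton] at hcomap
        exact hcomap.symm.trans (congrArg (integral _) hG.symm)
    _ = ∫ p, G p ∂μ.toSphere.prod (.volumeIoiPow (finrank ℝ E - 1)) := hpolar.integral_comp hemb G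
    _ = ∫ u, (∫ r in Ioi (0 : ℝ), r ^ (finrank ℝ E - 1) • g (r • u)) ∂μ.toSphere := by
        rw [integral_prod G hint]
        exact integral_congr_ae (.of_forall fun u ↦
          integral_volumeIoiPow _ fun r ↦ g (r • (u : E)))

end PolarCoordinates

section UniformMeasure

variable {E : Type*} [NormedAddCommGroup E] [InnerProductSpace ℝ E] [MeasurableSpace E]
  [BorelSpace E]

theorem charFun_eq_of_norm_eq {ν : Measure E} (hν : ∀ O : E ≃ₗᵢ[ℝ] E, ν.map O = ν) {v w : E}
    (h : ‖v‖ = ‖w‖) : charFun ν v = charFun ν w := by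
  set O : E ≃ₗᵢ[ℝ] E := Submodule.reflection (Submodule.span ℝ {v - w})ᗮ
  have hO : O v = w := Submodule.reflection_sub h
  calc charFun ν v = ∫ x, Complex.exp (⟪O x, O v⟫ * Complex.I) ∂ν := by
        simp only [charFun_apply, O.inner_map_map]
    _ = charFun (ν.map O) w := by
        rw [charFun_apply, hO]
        exact (O.toHomeomorph.measurableEmbedding.integral_map
          fun y ↦ Complex.exp (⟪y, w⟫ * Complex.I)).symm
    _ = charFun ν w := by rw [hν]

theorem integral_charFun_norm_smul {σ ν : Measure E} (hσ : ∀ᵐ x ∂σ, ‖x‖ = 1)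
    (hν : ∀ O : E ≃ₗᵢ[ℝ] E, ν.map O = ν) (ξ : E) :
    ∫ x, charFun ν (‖ξ‖ • x) ∂σ = σ.real univ • charFun ν ξ := by
  have hconst : ∀ᵐ x ∂σ, charFun ν (‖ξ‖ • x) = charFun ν ξ := by
    filter_upwards [hσ] with x hx
    exact charFun_eq_of_norm_eq hν (by rw [norm_smul, norm_norm, hx, mul_one])
  rw [integral_congr_ae hconst, integral_const]

theorem integral_charFun_smul_comm [SecondCountableTopology E] (σ ν : Measure E)
    [IsFiniteMeasure σ] [IsFiniteMeasure ν] (t : ℝ) :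
    ∫ x, charFun ν (t • x) ∂σ = ∫ x, charFun σ (t • x) ∂ν := by
  have hint : Integrable
      (Function.uncurry fun x y : E ↦ Complex.exp (⟪y, t • x⟫ * Complex.I)) (σ.prod ν) := by
    refine (integrable_const (1 : ℝ)).mono' ?_ (.of_forall fun p ↦ ?_)
    · exact Continuous.aestronglyMeasurable (by unfold Function.uncurry; fun_prop)
    · exact (Complex.norm_exp_ofReal_mul_I _).le
  simp only [charFun_apply]
  rw [integral_integral_swap hint]
  simp only [inner_smul_right, real_inner_comm]

theorem measure_univ_smul_eq_of_map_eq [CompleteSpace E] [SecondCountableTopology E]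
    {σ ν : Measure E} [IsFiniteMeasure σ] [IsFiniteMeasure ν]
    (hσ : ∀ᵐ x ∂σ, ‖x‖ = 1) (hν : ∀ᵐ x ∂ν, ‖x‖ = 1)
    (hσO : ∀ O : E ≃ₗᵢ[ℝ] E, σ.map O = σ) (hνO : ∀ O : E ≃ₗᵢ[ℝ] E, ν.map O = ν) :
    σ univ • ν = ν univ • σ := by
  have := ν.smul_finite (measure_ne_top σ univ)
  have := σ.smul_finite (measure_ne_top ν univ)
  refine Measure.ext_of_charFun (funext fun ξ ↦ ?_)
  calc charFun (σ univ • ν) ξ = σ.real univ • charFun ν ξ := by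
        simp only [charFun_apply, integral_smul_measure, measureReal_def]
    _ = ∫ x, charFun ν (‖ξ‖ • x) ∂σ := (integral_charFun_norm_smul hσ hνO ξ).symm
    _ = ∫ x, charFun σ (‖ξ‖ • x) ∂ν := integral_charFun_smul_comm σ ν ‖ξ‖
    _ = ν.real univ • charFun σ ξ := integral_charFun_norm_smul hν hσO ξ
    _ = charFun (ν univ • σ) ξ := by
        simp only [charFun_apply, integral_smul_measure, measureReal_def]

theorem map_val_toSphere_apply {E : Type*} [NormedAddCommGroup E] [NormedSpace ℝ E]
    [MeasurableSpace E] [BorelSpace E] (μ : Measure E) {s : Set E} (hs : MeasurableSet s) :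
    μ.toSphere.map Subtype.val s = finrank ℝ E * μ (Ioo (0 : ℝ) 1 • (sphere 0 1 ∩ s)) := by
  rw [Measure.map_apply measurable_subtype_coe hs,
    μ.toSphere_apply' (measurable_subtype_coe hs), Subtype.image_preimage_coe]

variable [FiniteDimensional ℝ E]

theorem map_linearIsometryEquiv_map_val_toSphere (O : E ≃ₗᵢ[ℝ] E) :
    ((volume : Measure E).toSphere.map Subtype.val).map O =
      (volume : Measure E).toSphere.map Subtype.val := by
  ext s hs
  have hpreimage : O ⁻¹' (Ioo (0 : ℝ) 1 • (sphere 0 1 ∩ s)) =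
      Ioo (0 : ℝ) 1 • (sphere 0 1 ∩ O ⁻¹' s) := by
    calc O ⁻¹' (Ioo (0 : ℝ) 1 • (sphere 0 1 ∩ s))
        = Ioo (0 : ℝ) 1 • (O ⁻¹' (sphere 0 1 ∩ s)) := by
          rw [← O.symm_symm, ← O.symm.image_eq_preimage_symm, ← O.symm.image_eq_preimage_symm]
          exact image_image2_distrib_right O.symm.map_smul
      _ = Ioo (0 : ℝ) 1 • (sphere 0 1 ∩ O ⁻¹' s) := by
          rw [preimage_inter, O.preimage_sphere, map_zero]
  rw [Measure.map_apply O.continuous.measurable hs, map_val_toSphere_apply _ hs,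
    map_val_toSphere_apply _ (O.continuous.measurable hs), ← hpreimage,
    O.measurePreserving.measure_preimage_emb O.toHomeomorph.measurableEmbedding]

theorem map_val_toSphere_eq_smul {σ : Measure E} [IsProbabilityMeasure σ]
    (hσ : σ (sphere 0 1)ᶜ = 0) (hσO : ∀ O : E ≃ₗᵢ[ℝ] E, σ.map O = σ) :
    (volume : Measure E).toSphere.map Subtype.val =
      (finrank ℝ E * volume (ball (0 : E) 1)) • σ := by
  have hσ' : ∀ᵐ x ∂σ, ‖x‖ = 1 := by
    filter_upwards [compl_mem_ae_iff.2 hσ] with x hx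
    simpa using hx
  have hν : ∀ᵐ x ∂(volume : Measure E).toSphere.map Subtype.val, ‖x‖ = 1 := by
    rw [ae_map_iff (by fun_prop) (measurableSet_eq_fun (by fun_prop) (by fun_prop))]
    exact .of_forall fun u ↦ norm_eq_of_mem_sphere u
  simpa [Measure.map_apply measurable_subtype_coe] using measure_univ_smul_eq_of_map_eq
    hσ' hν hσO map_linearIsometryEquiv_map_val_toSphere

theorem integral_toSphere_eq_smul_integral {F : Type*} [NormedAddCommGroup F] [NormedSpace ℝ F]
    {σ : Measure E} [IsProbabilityMeasure σ] (hσ : σ (sphere 0 1)ᶜ = 0)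
    (hσO : ∀ O : E ≃ₗᵢ[ℝ] E, σ.map O = σ) (φ : E → F) :
    ∫ u, φ u ∂(volume : Measure E).toSphere =
      (finrank ℝ E * volume.real (ball (0 : E) 1)) • ∫ u, φ u ∂σ := by
  rw [← (MeasurableEmbedding.subtype_coe isClosed_sphere.measurableSet).integral_map φ,
    map_val_toSphere_eq_smul hσ hσO, integral_smul_measure, ENNReal.toReal_mul,
    ENNReal.toReal_natCast, measureReal_def]

end UniformMeasure

section ExitDist

variable {E : Type*} [NormedAddCommGroup E] [InnerProductSpace ℝ E]

/-- The distance from the origin at which the ray in the unit direction `u` leaves the closed ball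
of radius `δ` centred at `h`, when that ball contains the origin. -/
noncomputable def exitDist (δ : ℝ) (h u : E) : ℝ :=
  ⟪h, u⟫ + √(δ ^ 2 - ‖h‖ ^ 2 + ⟪h, u⟫ ^ 2)

variable {δ : ℝ} {h u : E}

theorem continuous_exitDist (δ : ℝ) (h : E) : Continuous (exitDist δ h) := by
  unfold exitDist
  fun_prop

theorem exitDist_zero_left (hδ : 0 ≤ δ) (u : E) : exitDist δ 0 u = δ := by
  simp [exitDist, Real.sqrt_sq hδ]

theorem sq_inner_le_exitDist_radicand (hh : ‖h‖ ≤ δ) (u : E) :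
    ⟪h, u⟫ ^ 2 ≤ δ ^ 2 - ‖h‖ ^ 2 + ⟪h, u⟫ ^ 2 :=
  le_add_of_nonneg_left (sub_nonneg.2 (by gcongr))

theorem exitDist_radicand_nonneg (hh : ‖h‖ ≤ δ) (u : E) :
    0 ≤ δ ^ 2 - ‖h‖ ^ 2 + ⟪h, u⟫ ^ 2 :=
  (sq_nonneg _).trans (sq_inner_le_exitDist_radicand hh u)

theorem abs_inner_le_sqrt (hh : ‖h‖ ≤ δ) (u : E) :
    |⟪h, u⟫| ≤ √(δ ^ 2 - ‖h‖ ^ 2 + ⟪h, u⟫ ^ 2) :=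
  Real.abs_le_sqrt (sq_inner_le_exitDist_radicand hh u)

theorem exitDist_nonneg (hh : ‖h‖ ≤ δ) (u : E) : 0 ≤ exitDist δ h u :=
  neg_le_iff_add_nonneg.1 (neg_le_of_abs_le (abs_inner_le_sqrt hh u))

theorem norm_smul_sub_sq (hu : ‖u‖ = 1) (r : ℝ) :
    ‖r • u - h‖ ^ 2 = (r - ⟪h, u⟫) ^ 2 + ‖h‖ ^ 2 - ⟪h, u⟫ ^ 2 := by
  rw [norm_sub_sq_real, norm_smul, hu, mul_one, Real.norm_eq_abs, sq_abs, real_inner_smul_left,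
    real_inner_comm]
  ring

theorem norm_exitDist_smul_sub (hh : ‖h‖ ≤ δ) (hu : ‖u‖ = 1) :
    ‖exitDist δ h u • u - h‖ = δ := by
  rw [← sq_eq_sq₀ (norm_nonneg _) ((norm_nonneg h).trans hh), norm_smul_sub_sq hu, exitDist,
    add_sub_cancel_left, Real.sq_sqrt (exitDist_radicand_nonneg hh u)]
  ring

theorem smul_mem_closedBall_iff_le_exitDist (hh : ‖h‖ ≤ δ) (hu : ‖u‖ = 1) {r : ℝ} (hr : 0 ≤ r) :
    r • u ∈ closedBall h δ ↔ r ≤ exitDist δ h u := by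
  have hδ : 0 ≤ δ := (norm_nonneg h).trans hh
  have hlower : -√(δ ^ 2 - ‖h‖ ^ 2 + ⟪h, u⟫ ^ 2) ≤ r - ⟪h, u⟫ := by
    linarith [(abs_le.1 (abs_inner_le_sqrt hh u)).2]
  calc r • u ∈ closedBall h δ ↔ ‖r • u - h‖ ^ 2 ≤ δ ^ 2 := by
        rw [mem_closedBall, dist_eq_norm, sq_le_sq₀ (norm_nonneg _) hδ]
    _ ↔ (r - ⟪h, u⟫) ^ 2 ≤ δ ^ 2 - ‖h‖ ^ 2 + ⟪h, u⟫ ^ 2 := by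
        rw [norm_smul_sub_sq hu, ← sub_nonneg, ← sub_nonneg (b := (r - ⟪h, u⟫) ^ 2)]
        ring_nf
    _ ↔ r ≤ exitDist δ h u := by
        rw [Real.sq_le (exitDist_radicand_nonneg hh u), and_iff_right hlower,
          sub_le_iff_le_add', exitDist]

theorem abs_exitDist_sub_le (hh : ‖h‖ ≤ δ) (hu : ‖u‖ = 1) : |exitDist δ h u - δ| ≤ ‖h‖ := by
  have hnorm : ‖exitDist δ h u • u‖ = exitDist δ h u := by
    rw [norm_smul, hu, mul_one, Real.norm_of_nonneg (exitDist_nonneg hh u)]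
  calc |exitDist δ h u - δ|
      = |‖exitDist δ h u • u‖ - ‖exitDist δ h u • u - h‖| := by
        rw [hnorm, norm_exitDist_smul_sub hh hu]
    _ ≤ ‖exitDist δ h u • u - (exitDist δ h u • u - h)‖ := abs_norm_sub_norm_le _ _
    _ = ‖h‖ := by rw [sub_sub_cancel]

theorem hasFDerivAt_exitDist_zero (hδ : 0 < δ) (u : E) :
    HasFDerivAt (exitDist δ · u) (innerSL ℝ u) 0 := by
  have hinner : HasFDerivAt (fun h : E ↦ ⟪h, u⟫) (innerSL ℝ u) 0 := by
    simpa only [real_inner_comm] using! (innerSL ℝ u).hasFDerivAt (x := 0)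
  have hradicand : HasFDerivAt (fun h : E ↦ δ ^ 2 - ‖h‖ ^ 2 + ⟪h, u⟫ ^ 2) (0 : E →L[ℝ] ℝ) 0 := by
    have := ((hasStrictFDerivAt_norm_sq (0 : E)).hasFDerivAt.const_sub (δ ^ 2)).add (hinner.pow 2)
    simpa using! this
  exact (hinner.fun_add (hradicand.sqrt (by simpa using hδ.ne'))).congr_fderiv (by simp)

variable {F : Type*} [NormedAddCommGroup F] [NormedSpace ℝ F]

theorem norm_integral_exitDist_sub_le {k : ℝ → F} (hk : Continuous k) {C : ℝ}
    (hC : ∀ r ∈ Icc 0 (2 * δ), ‖k r‖ ≤ C) (hh : ‖h‖ ≤ δ) (hu : ‖u‖ = 1) :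
    ‖(∫ r in 0..exitDist δ h u, k r) - ∫ r in 0..exitDist δ 0 u, k r‖ ≤ C * ‖h‖ := by
  have hδ : 0 ≤ δ := (norm_nonneg h).trans hh
  have habs := abs_exitDist_sub_le hh hu
  have hC₀ : 0 ≤ C := (norm_nonneg _).trans (hC 0 ⟨le_rfl, by positivity⟩)
  rw [exitDist_zero_left hδ, intervalIntegral.integral_interval_sub_left
    (hk.intervalIntegrable _ _) (hk.intervalIntegrable _ _)]
  calc ‖∫ r in δ..exitDist δ h u, k r‖ ≤ C * |exitDist δ h u - δ| :=
        intervalIntegral.norm_integral_le_of_norm_le_const fun r hr ↦ hC r <|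
          uIcc_subset_Icc ⟨hδ, by linarith⟩
            ⟨exitDist_nonneg hh u, by linarith [(abs_le.1 habs).2]⟩ (uIoc_subset_uIcc hr)
    _ ≤ C * ‖h‖ := by gcongr

theorem hasFDerivAt_integral_exitDist_zero [CompleteSpace F] (hδ : 0 < δ) {k : ℝ → F}
    (hk : Continuous k) (u : E) :
    HasFDerivAt (fun h ↦ ∫ r in 0..exitDist δ h u, k r) ((innerSL ℝ u).smulRight (k δ)) 0 := by
  have hprim : HasFDerivAt (fun b ↦ ∫ r in 0..b, k r) (.toSpanSingleton ℝ (k δ))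
      (exitDist δ 0 u) := by
    rw [exitDist_zero_left hδ.le]
    exact (hk.integral_hasStrictDerivAt 0 δ).hasDerivAt.hasFDerivAt
  refine (hprim.comp 0 (hasFDerivAt_exitDist_zero hδ u)).congr_fderiv ?_
  ext; simp

theorem hasFDerivAt_integral_sphere_integral_exitDist [FiniteDimensional ℝ E] [MeasurableSpace E]
    [BorelSpace E] [CompleteSpace F]
    (ν : Measure (sphere (0 : E) 1)) [IsFiniteMeasure ν] (hδ : 0 < δ)
    {k : sphere (0 : E) 1 → ℝ → F} (hk : Continuous k.uncurry) :
    HasFDerivAt (fun h : E ↦ ∫ u, (∫ r in 0..exitDist δ h u, k u r) ∂ν)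
      (∫ u, (innerSL ℝ (u : E)).smulRight (k u δ) ∂ν) 0 := by
  have hku (u) : Continuous (k u) := hk.comp (.prodMk_right u)
  obtain ⟨C, hC⟩ := (isCompact_univ.prod (isCompact_Icc (a := 0)
    (b := 2 * δ))).exists_bound_of_continuousOn hk.continuousOn
  have hcont (h : E) : Continuous fun u : sphere (0 : E) 1 ↦ ∫ r in 0..exitDist δ h u, k u r :=
    intervalIntegral.continuous_parametric_intervalIntegral_of_continuous hk
      ((continuous_exitDist δ h).comp continuous_subtype_val)
  have hcont' : Continuous fun u : sphere (0 : E) 1 ↦ (innerSL ℝ (u : E)).smulRight (k u δ) := by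
    fun_prop
  refine (hasFDerivAt_integral_of_dominated_loc_of_lip' (bound := fun _ ↦ C)
    (closedBall_mem_nhds (0 : E) hδ) (fun h _ ↦ (hcont h).aestronglyMeasurable)
    ((hcont 0).integrable_of_hasCompactSupport (.of_compactSpace _))
    hcont'.aestronglyMeasurable (.of_forall fun u h hh ↦ ?_) (integrable_const C)
    (.of_forall fun u ↦ hasFDerivAt_integral_exitDist_zero hδ (hku u) (u : E))).2
  rw [sub_zero]
  exact norm_integral_exitDist_sub_le (hku u) (fun r hr ↦ hC (u, r) ⟨mem_univ u, hr⟩)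
    (mem_closedBall_zero_iff.1 hh) (norm_eq_of_mem_sphere u)

end ExitDist

section BallIntegral

variable {E : Type*} [NormedAddCommGroup E] [InnerProductSpace ℝ E] [FiniteDimensional ℝ E]
  [Nontrivial E] [MeasurableSpace E] [BorelSpace E] {F : Type*} [NormedAddCommGroup F]
  [NormedSpace ℝ F] (μ : Measure E) [μ.IsAddHaarMeasure] {δ : ℝ}

theorem setIntegral_closedBall_eq_integral_toSphere {h : E} (hh : ‖h‖ ≤ δ) {g : E → F}
    (hg : IntegrableOn g (closedBall h δ) μ) :
    ∫ y in closedBall h δ, g y ∂μ =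
      ∫ u, (∫ r in 0..exitDist δ h u, r ^ (finrank ℝ E - 1) • g (r • u)) ∂μ.toSphere := by
  rw [← integral_indicator measurableSet_closedBall, integral_eq_integral_toSphere μ
    (hg.integrable_indicator measurableSet_closedBall)]
  refine integral_congr_ae (.of_forall fun u ↦ ?_)
  have hray : EqOn (fun r : ℝ ↦ r ^ (finrank ℝ E - 1) • (closedBall h δ).indicator g (r • u))
      ((Iic (exitDist δ h u)).indicator fun r ↦ r ^ (finrank ℝ E - 1) • g (r • u)) (Ioi 0) := by
    intro r hr
    have hmem : r • (u : E) ∈ closedBall h δ ↔ r ∈ Iic (exitDist δ h u) :=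
      smul_mem_closedBall_iff_le_exitDist hh (norm_eq_of_mem_sphere u) (le_of_lt hr)
    by_cases hexit : r ∈ Iic (exitDist δ h u)
    · simp only [indicator_of_mem hexit, indicator_of_mem (hmem.2 hexit)]
    · simp only [indicator_of_notMem hexit, indicator_of_notMem (mt hmem.1 hexit), smul_zero]
  beta_reduce
  rw [setIntegral_congr_fun measurableSet_Ioi hray, setIntegral_indicator measurableSet_Iic,
    Ioi_inter_Iic, intervalIntegral.integral_of_le (exitDist_nonneg hh _)]

theorem hasFDerivAt_setIntegral_closedBall [CompleteSpace F] (hδ : 0 < δ) {f : E → F}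
    (hf : Continuous f) (x : E) :
    HasFDerivAt (fun y ↦ ∫ z in closedBall y δ, f z ∂μ)
      (∫ u : sphere (0 : E) 1,
        (innerSL ℝ (u : E)).smulRight (δ ^ (finrank ℝ E - 1) • f (x + δ • u)) ∂μ.toSphere) x := by
  have htranslate (y : E) :
      ∫ z in closedBall (y - x) δ, f (x + z) ∂μ = ∫ z in closedBall y δ, f z ∂μ := by
    rw [← (measurePreserving_add_left μ x).setIntegral_preimage_emb
      (Homeomorph.addLeft x).measurableEmbedding f, preimage_add_closedBall]
  have hpolar : (fun h ↦ ∫ z in closedBall h δ, f (x + z) ∂μ) =ᶠ[nhds 0] fun h ↦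
      ∫ u, (∫ r in 0..exitDist δ h u, r ^ (finrank ℝ E - 1) • f (x + r • u)) ∂μ.toSphere := by
    filter_upwards [closedBall_mem_nhds (0 : E) hδ] with h hh
    exact setIntegral_closedBall_eq_integral_toSphere μ (mem_closedBall_zero_iff.1 hh)
      ((hf.comp (continuous_const_add x)).continuousOn.integrableOn_compact
        (isCompact_closedBall h δ))
  have hderiv := (hasFDerivAt_integral_sphere_integral_exitDist μ.toSphere hδ
    (k := fun u r ↦ r ^ (finrank ℝ E - 1) • f (x + r • u))
    (by unfold Function.uncurry; fun_prop)).congr_of_eventuallyEq hpolar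
  exact ((hasFDerivAt_comp_sub x).2 (by rwa [sub_self])).congr_of_eventuallyEq
    (.of_forall fun y ↦ (htranslate y).symm)

theorem hasGradientAt_setIntegral_closedBall (hδ : 0 < δ) {f : E → ℝ} (hf : Continuous f) (x : E) :
    HasGradientAt (fun y ↦ ∫ z in closedBall y δ, f z ∂μ)
      (δ ^ (finrank ℝ E - 1) • ∫ u : sphere (0 : E) 1, f (x + δ • u) • (u : E) ∂μ.toSphere) x := by
  rw [hasGradientAt_iff_hasFDerivAt]
  refine (hasFDerivAt_setIntegral_closedBall μ hδ hf x).congr_fderiv ?_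
  have hdual (u : sphere (0 : E) 1) :
      (innerSL ℝ (u : E)).smulRight (δ ^ (finrank ℝ E - 1) • f (x + δ • u)) =
        InnerProductSpace.toDual ℝ E (δ ^ (finrank ℝ E - 1) • f (x + δ • u) • (u : E)) := by
    ext v
    simp only [ContinuousLinearMap.smulRight_apply, innerSL_apply_apply, smul_smul, smul_eq_mul,
      InnerProductSpace.toDual_apply_apply, real_inner_smul_left]
    ring
  rw [← integral_smul]
  simp only [hdual]
  exact (InnerProductSpace.toDual ℝ E).toContinuousLinearEquiv.integral_comp_comm _

end BallIntegral

theorem nontrivial_of_measure_compl_sphere_eq_zero {E : Type*} [NormedAddCommGroup E]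
    [MeasurableSpace E] {σ : Measure E} [NeZero σ] (hσ : σ (sphere 0 1)ᶜ = 0) :
    Nontrivial E := by
  by_contra h
  have := not_nontrivial_iff_subsingleton.1 h
  rw [sphere_eq_empty_of_subsingleton one_ne_zero, compl_empty] at hσ
  exact NeZero.ne σ (Measure.measure_univ_eq_zero.1 hσ)

theorem smoothed_gradient_general {E : Type*} [NormedAddCommGroup E] [InnerProductSpace ℝ E]
    [FiniteDimensional ℝ E] [MeasurableSpace E] [BorelSpace E] {δ : ℝ} (hδ : 0 < δ) {f : E → ℝ}
    (hf : Continuous f) {σ : Measure E} [IsProbabilityMeasure σ] (hσ : σ (sphere 0 1)ᶜ = 0)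
    (hσO : ∀ O : E ≃ₗᵢ[ℝ] E, σ.map O = σ) (x : E) :
    HasGradientAt (fun y ↦ ⨍ z in closedBall y δ, f z)
      ((finrank ℝ E / δ) • ∫ u, f (x + δ • u) • u ∂σ) x := by
  have := nontrivial_of_measure_compl_sphere_eq_zero hσ
  have hgrad := (hasGradientAt_setIntegral_closedBall volume hδ hf x).hasFDerivAt
  rw [integral_toSphere_eq_smul_integral hσ hσO fun u ↦ f (x + δ • u) • u] at hgrad
  have hn : finrank ℝ E ≠ 0 := finrank_pos.ne'
  have hV : volume.real (ball (0 : E) 1) ≠ 0 :=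
    (ENNReal.toReal_pos (measure_ball_pos _ _ one_pos).ne' measure_ball_lt_top.ne).ne'
  simp only [setAverage_eq, Measure.addHaar_real_closedBall _ _ hδ.le]
  set n := finrank ℝ E
  set V := volume.real (ball (0 : E) 1)
  have hcoeff : (δ ^ n * V)⁻¹ * (δ ^ (n - 1) * (n * V)) = n / δ := by
    rw [← pow_sub_one_mul hn δ]
    field_simp
  rw [hasGradientAt_iff_hasFDerivAt, ← hcoeff]
  exact (hgrad.const_smul (δ ^ n * V)⁻¹).congr_fderiv (by simp only [map_smul, smul_smul])

/-- One-point gradient estimation for bandit convex optimization: the ball-smoothed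
function `f̂(x) = avg of f over B(x,δ)` is differentiable, with gradient
`∇f̂(x) = (N/δ) · ∫_{S^{N−1}} f(x+δu)·u dσ(u)`, where σ is the uniform probability
measure on the unit sphere (characterized as the rotation-invariant probability
measure supported on the sphere). -/
theorem smoothed_gradient (N : ℕ) (hN : 1 ≤ N) (δ : ℝ) (hδ : 0 < δ)
    (f : EuclideanSpace ℝ (Fin N) → ℝ) (hf : Continuous f)
    (fhat : EuclideanSpace ℝ (Fin N) → ℝ)
    (hfhat : ∀ x, fhat x =
      ((MeasureTheory.volume (Metric.closedBall x δ)).toReal)⁻¹ *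
        ∫ y in Metric.closedBall x δ, f y)
    (σ : MeasureTheory.Measure (EuclideanSpace ℝ (Fin N)))
    (hσprob : MeasureTheory.IsProbabilityMeasure σ)
    (hσsupp : σ (Metric.sphere (0 : EuclideanSpace ℝ (Fin N)) 1)ᶜ = 0)
    (hσinv : ∀ O : EuclideanSpace ℝ (Fin N) ≃ₗᵢ[ℝ] EuclideanSpace ℝ (Fin N),
      σ.map O = σ) :
    ∀ x : EuclideanSpace ℝ (Fin N),
      HasGradientAt fhat (((N : ℝ) / δ) • ∫ u, f (x + δ • u) • u ∂σ) x := by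
  obtain rfl : fhat = fun x ↦ ⨍ y in closedBall x δ, f y :=
    funext fun x ↦ (hfhat x).trans (setAverage_eq volume f _).symm
  simpa only [finrank_euclideanSpace_fin] using smoothed_gradient_general hδ hf hσsupp hσinv
end
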